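/- Let $S$ be a nonzero seminorm on a vector space $X$ over $\mathbb{F}$ (either $\mathbb{R}$ or $\mathbb{C}$). Then $S$ is continuous with respect to the topology induced by every norm on $X$ if and only if $X$ is finite-dimensional. -/

import Mathlib

open Filter Topology

/-- `S` is a seminorm on the `𝕜`-vector space `X`: nonnegative, absolutely
homogeneous, and subadditive. -/
def IsSeminormOn (𝕜 : Type*) [RCLike 𝕜] {X : Type*} [AddCommGroup X] [Module 𝕜 X]
    (S : X → ℝ) : Prop :=
  (∀ x, 0 ≤ S x) ∧ (∀ (a : 𝕜) (x : X), S (a • x) = ‖a‖ * S x) ∧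
    (∀ x y, S (x + y) ≤ S x + S y)

/-- `N` is a norm on the `𝕜`-vector space `X`: a positive-definite seminorm. -/
def IsNormOn (𝕜 : Type*) [RCLike 𝕜] {X : Type*} [AddCommGroup X] [Module 𝕜 X]
    (N : X → ℝ) : Prop :=
  IsSeminormOn 𝕜 N ∧ ∀ x : X, x ≠ 0 → 0 < N x

/-- `S` is continuous at `x` with respect to the metric topology induced by `N`
via the distance `d(x, y) = N (x - y)`. -/
def ContinuousAtWrt {X : Type*} [AddCommGroup X] (N S : X → ℝ) (x : X) : Prop :=
  ∀ ε : ℝ, 0 < ε → ∃ δ : ℝ, 0 < δ ∧ ∀ y : X, N (y - x) < δ → |S y - S x| < ε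

/-!
On a finite-dimensional space every seminorm is bounded by a combination of coordinate functionals,
hence continuous. Conversely, if `S ≠ 0` then the complement of the kernel of `S` spans the space,
so there is a basis `b` with `S (b i) ≠ 0` for all `i`. If the index set is infinite, map it onto
`ℕ` by some `g`; the `ℓ¹` norm in the basis `b` with weights `S (b i) / (g i + 1)` takes these
values at the `b i`, so no multiple of it bounds `S`.
-/

open scoped NNReal

theorem span_setOf_seminorm_ne_zero {𝕜 X : Type*} [SeminormedRing 𝕜] [AddCommGroup X] [Module 𝕜 X]
    {S : Seminorm 𝕜 X} (hS : S ≠ 0) :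
    Submodule.span 𝕜 {x | S x ≠ 0} = ⊤ := by
  obtain ⟨x₀, hx₀⟩ : ∃ x₀, S x₀ ≠ 0 := DFunLike.ne_iff.1 hS
  refine Submodule.eq_top_iff'.2 fun x ↦ ?_
  by_cases hx : S x = 0
  · have hxx₀ : S (x + x₀) ≠ 0 := by
      have h : S x₀ ≤ S (x + x₀) + S x := by
        simpa only [add_sub_cancel_left] using map_sub_le_add S (x + x₀) x
      rw [hx, add_zero] at h
      exact (((apply_nonneg S x₀).lt_of_ne' hx₀).trans_le h).ne'
    rw [← add_sub_cancel_right x x₀]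
    exact Submodule.sub_mem _ (Submodule.subset_span hxx₀) (Submodule.subset_span hx₀)
  · exact Submodule.subset_span hx

section SeparatingSeminorms

variable {𝕜 X ι : Type*} [NormedDivisionRing 𝕜] [AddCommGroup X] [Module 𝕜 X]

theorem exists_basis_seminorm_pos {S : Seminorm 𝕜 X} (hS : S ≠ 0) :
    ∃ (ι : Set X) (b : Module.Basis ι 𝕜 X), ∀ i, 0 < S (b i) :=
  have hspan := (span_setOf_seminorm_ne_zero hS).ge
  ⟨_, .ofSpan hspan, fun i ↦ (apply_nonneg S _).lt_of_ne'
    (Module.Basis.ofSpan_subset hspan (Set.mem_range_self i))⟩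

/-- The weighted `ℓ¹` seminorm `∑ i, w i * ‖xᵢ‖`, where the `xᵢ` are the coordinates of `x` in the
basis `b`. It provides norms with prescribed values on a basis; the weights are in `ℝ≥0` so that it
is a seminorm without side conditions. -/
noncomputable def weightedL1Seminorm (b : Module.Basis ι 𝕜 X) (w : ι → ℝ≥0) : Seminorm 𝕜 X :=
  .of (fun x ↦ (b.repr x).sum fun i c ↦ w i * ‖c‖)
    (fun x y ↦ by
      classical
      have hsum (z : X) (hz : (b.repr z).support ⊆ (b.repr x).support ∪ (b.repr y).support) :=
        Finsupp.sum_of_support_subset (b.repr z) hz (fun i c ↦ (w i : ℝ) * ‖c‖) (by simp)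
      rw [hsum _ (by rw [map_add]; exact Finsupp.support_add), hsum _ Finset.subset_union_left,
        hsum _ Finset.subset_union_right, ← Finset.sum_add_distrib]
      gcongr with i
      rw [map_add, Finsupp.add_apply, ← mul_add]
      gcongr
      exact norm_add_le _ _)
    (fun a x ↦ by
      rw [map_smul, Finsupp.sum_of_support_subset _ Finsupp.support_smul _ (by simp),
        Finsupp.sum, Finset.mul_sum]
      simp only [Finsupp.smul_apply, smul_eq_mul, norm_mul, mul_left_comm])

theorem weightedL1Seminorm_apply (b : Module.Basis ι 𝕜 X) (w : ι → ℝ≥0) (x : X) :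
    weightedL1Seminorm b w x = (b.repr x).sum fun i c ↦ w i * ‖c‖ :=
  rfl

theorem weightedL1Seminorm_basis (b : Module.Basis ι 𝕜 X) (w : ι → ℝ≥0) (i : ι) :
    weightedL1Seminorm b w (b i) = w i := by
  simp [weightedL1Seminorm_apply, Finsupp.sum_single_index]

theorem eq_zero_of_weightedL1Seminorm_eq_zero (b : Module.Basis ι 𝕜 X) {w : ι → ℝ≥0}
    (hw : ∀ i, 0 < w i) {x : X} (hx : weightedL1Seminorm b w x = 0) : x = 0 := by
  rw [weightedL1Seminorm_apply, Finsupp.sum] at hx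
  have hcoord := (Finset.sum_eq_zero_iff_of_nonneg fun i _ ↦ by positivity).1 hx
  refine b.ext_elem fun i ↦ ?_
  by_contra hi
  rw [map_zero, Finsupp.zero_apply] at hi
  have hpos : 0 < (w i : ℝ) * ‖b.repr x i‖ := mul_pos (hw i) (norm_pos_iff.2 hi)
  exact hpos.ne' (hcoord i (Finsupp.mem_support_iff.2 hi))

theorem exists_separating_seminorm_forall_mul_lt (hX : ¬ Module.Finite 𝕜 X)
    {S : Seminorm 𝕜 X} (hS : S ≠ 0) :
    ∃ N : Seminorm 𝕜 X, (∀ x, N x = 0 → x = 0) ∧ ∀ C : ℝ, ∃ x, C * N x < S x := by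
  obtain ⟨ι, b, hb⟩ := exists_basis_seminorm_pos hS
  have : Infinite ι := not_finite_iff_infinite.1 fun _ ↦ hX (.of_basis b)
  obtain ⟨g, hg⟩ : ∃ g : ι → ℕ, g.Surjective :=
    ⟨_, Function.invFun_surjective (Infinite.natEmbedding ι).injective⟩
  let w (i : ι) : ℝ≥0 := ⟨S (b i), apply_nonneg S _⟩ / (g i + 1)
  have hw (i : ι) : 0 < w i := div_pos (hb i) (by positivity)
  refine ⟨weightedL1Seminorm b w, fun x ↦ eq_zero_of_weightedL1Seminorm_eq_zero b hw, fun C ↦ ?_⟩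
  obtain ⟨n, hn⟩ := exists_nat_gt C
  obtain ⟨i, rfl⟩ := hg n
  refine ⟨b i, ?_⟩
  calc C * weightedL1Seminorm b w (b i) = C * (S (b i) / (g i + 1)) := by
        rw [weightedL1Seminorm_basis]; rfl
    _ = C / (g i + 1) * S (b i) := by ring
    _ < 1 * S (b i) := by
        gcongr
        · exact hb i
        · exact (div_lt_one (by positivity)).2 (hn.trans (lt_add_one _))
    _ = S (b i) := one_mul _

end SeparatingSeminorms

section Continuity

theorem continuousAtWrt_norm_iff {X : Type*} [SeminormedAddCommGroup X] {f : X → ℝ} {x : X} :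
    ContinuousAtWrt norm f x ↔ ContinuousAt f x := by
  simp only [ContinuousAtWrt, Metric.continuousAt_iff, dist_eq_norm, Real.norm_eq_abs, gt_iff_lt]

variable {𝕜 X : Type*} [NontriviallyNormedField 𝕜] [AddCommGroup X] [Module 𝕜 X]

theorem exists_seminorm_le_mul_of_continuousAtWrt_zero {N S : Seminorm 𝕜 X}
    (h : ContinuousAtWrt N S 0) : ∃ C : ℝ, ∀ x, S x ≤ C * N x := by
  let := AddGroupSeminormClass.toSeminormedAddCommGroup N
  let : NormedSpace 𝕜 X := ⟨fun a x ↦ (map_smul_eq_mul N a x).le⟩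
  have hS : Continuous S := Seminorm.continuous_of_continuousAt_zero (continuousAtWrt_norm_iff.1 h)
  obtain ⟨C, -, hC⟩ := Seminorm.bound_of_continuous_normedSpace S hS
  exact ⟨C, hC⟩

variable [CompleteSpace 𝕜] [FiniteDimensional 𝕜 X]

theorem seminorm_continuous_of_finiteDimensional [TopologicalSpace X] [IsTopologicalAddGroup X]
    [ContinuousSMul 𝕜 X] [T2Space X] (S : Seminorm 𝕜 X) : Continuous S := by
  let b := Module.finBasis 𝕜 X
  have hbound (x : X) : S x ≤ ∑ i, ‖b.coord i x‖ * S (b i) :=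
    calc S x = S (∑ i, b.coord i x • b i) := congrArg S (b.sum_repr x).symm
      _ ≤ ∑ i, S (b.coord i x • b i) :=
        Finset.le_sum_of_subadditive S (map_zero S).le (map_add_le_add S) _ _
      _ = ∑ i, ‖b.coord i x‖ * S (b i) := by simp only [map_smul_eq_mul]
  have hcoord (i) : Continuous (b.coord i) := (b.coord i).continuous_of_finiteDimensional
  have hlim : Tendsto (fun x ↦ ∑ i, ‖b.coord i x‖ * S (b i)) (𝓝 0) (𝓝 0) :=
    Continuous.tendsto' (by fun_prop) 0 0 (by simp)
  refine Seminorm.continuous_of_continuousAt_zero ?_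
  rw [ContinuousAt, map_zero]
  exact squeeze_zero (apply_nonneg S) hbound hlim

theorem seminorm_continuousAtWrt_of_finiteDimensional {N : Seminorm 𝕜 X}
    (hN : ∀ x, N x = 0 → x = 0) (S : Seminorm 𝕜 X) (x : X) : ContinuousAtWrt N S x := by
  let := AddGroupSeminormClass.toSeminormedAddCommGroup N
  let := NormedAddCommGroup.ofSeparation hN
  let : NormedSpace 𝕜 X := ⟨fun a x ↦ (map_smul_eq_mul N a x).le⟩
  exact continuousAtWrt_norm_iff.2 (seminorm_continuous_of_finiteDimensional S).continuousAt

end Continuity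

theorem seminorm_continuous_wrt_all_norms_iff_finiteDimensional_general
    {𝕜 X : Type*} [NontriviallyNormedField 𝕜] [CompleteSpace 𝕜] [AddCommGroup X] [Module 𝕜 X]
    {S : Seminorm 𝕜 X} (hS : S ≠ 0) :
    (∀ N : Seminorm 𝕜 X, (∀ x, N x = 0 → x = 0) → ∀ x, ContinuousAtWrt N S x) ↔
      FiniteDimensional 𝕜 X := by
  refine ⟨fun hcont ↦ ?_, fun _ N hN ↦ seminorm_continuousAtWrt_of_finiteDimensional hN S⟩
  by_contra hX
  obtain ⟨N, hN, hlt⟩ := exists_separating_seminorm_forall_mul_lt hX hS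
  obtain ⟨C, hC⟩ := exists_seminorm_le_mul_of_continuousAtWrt_zero (hcont N hN 0)
  obtain ⟨x, hx⟩ := hlt C
  exact (hC x).not_gt hx

section Bundling

variable {𝕜 X : Type*} [RCLike 𝕜] [AddCommGroup X] [Module 𝕜 X]

theorem isSeminormOn_iff_exists_seminorm {S : X → ℝ} :
    IsSeminormOn 𝕜 S ↔ ∃ p : Seminorm 𝕜 X, ⇑p = S := by
  refine ⟨fun ⟨_, hsmul, hadd⟩ ↦ ⟨.of S hadd hsmul, rfl⟩, ?_⟩
  rintro ⟨p, rfl⟩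
  exact ⟨apply_nonneg p, map_smul_eq_mul p, map_add_le_add p⟩

theorem isNormOn_iff_exists_seminorm {N : X → ℝ} :
    IsNormOn 𝕜 N ↔ ∃ p : Seminorm 𝕜 X, (∀ x, p x = 0 → x = 0) ∧ ⇑p = N := by
  rw [IsNormOn, isSeminormOn_iff_exists_seminorm]
  constructor
  · rintro ⟨⟨p, rfl⟩, hpos⟩
    exact ⟨p, fun x hx ↦ of_not_not fun hx₀ ↦ (hpos x hx₀).ne' hx, rfl⟩
  · rintro ⟨p, hp, rfl⟩
    exact ⟨⟨p, rfl⟩, fun x hx ↦ (apply_nonneg p x).lt_of_ne' (mt (hp x) hx)⟩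

end Bundling

/-- A nonzero seminorm S on a vector space X over ℝ or ℂ is continuous
with respect to every norm on X iff X is finite-dimensional. -/
theorem seminorm_continuous_wrt_all_norms_iff_finiteDimensional
    {𝕜 X : Type*} [RCLike 𝕜] [AddCommGroup X] [Module 𝕜 X]
    (S : X → ℝ) (hS : IsSeminormOn 𝕜 S) (hS0 : ∃ x : X, S x ≠ 0) :
    (∀ N : X → ℝ, IsNormOn 𝕜 N → ∀ x : X, ContinuousAtWrt N S x) ↔
      FiniteDimensional 𝕜 X := by
  obtain ⟨p, rfl⟩ := isSeminormOn_iff_exists_seminorm.1 hS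
  have hp : p ≠ 0 := DFunLike.ne_iff.2 hS0
  rw [← seminorm_continuous_wrt_all_norms_iff_finiteDimensional_general hp]
  simp only [isNormOn_iff_exists_seminorm, forall_exists_index, and_imp, forall_apply_eq_imp_iff₂]
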